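/- Under the algorithmic setting and local assumptions below, assume in addition that the Hölderian error-bound exponent satisfies q > 1/(1 + δ). Then {x^k} converges to x*, {‖r(x^k)‖} converges to 0 with convergence order ρ := min{1 + τ, δ + q} > 1, and {dist(x^k, X*)} converges to 0 with convergence order (1 + δ)q > 1; i.e., there exist C > 0 and k₀ such that dist(x^{k+1}, X*) ≤ C·dist(x^k, X*)^{(1+δ)q} for all k ≥ k₀. -/

import Mathlib

open scoped RealInnerProductSpace
open Filter Metric

noncomputable section

/-- The convex subdifferential of `g` at `y`. -/
def subdiff {n : ℕ} (g : EuclideanSpace ℝ (Fin n) → ℝ) (y : EuclideanSpace ℝ (Fin n)) :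
    Set (EuclideanSpace ℝ (Fin n)) :=
  {v | ∀ z, g y + ⟪v, z - y⟫ ≤ g z}

/-- The proximity operator `prox_g(z)`, the (unique, for convex `g`) minimizer of
`y ↦ g y + (1/2)‖y − z‖²`. -/
noncomputable def proxPt {n : ℕ} (g : EuclideanSpace ℝ (Fin n) → ℝ)
    (z : EuclideanSpace ℝ (Fin n)) : EuclideanSpace ℝ (Fin n) :=
  Classical.epsilon fun p => ∀ y, g p + (1 / 2) * ‖p - z‖ ^ 2 ≤ g y + (1 / 2) * ‖y - z‖ ^ 2

/-- The residual (prox-gradient) mapping `r(x) = x − prox_φ(x − ∇f(x))`. -/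
noncomputable def resid {n : ℕ} (f φ : EuclideanSpace ℝ (Fin n) → ℝ)
    (x : EuclideanSpace ℝ (Fin n)) : EuclideanSpace ℝ (Fin n) :=
  x - proxPt φ (x - gradient f x)

/-- The smallest eigenvalue of a symmetric operator on ℝᵐ, as the infimum of its quadratic
form over the unit sphere. -/
noncomputable def lambdaMin {m : ℕ} (T : EuclideanSpace ℝ (Fin m) →L[ℝ] EuclideanSpace ℝ (Fin m)) :
    ℝ :=
  ⨅ u : {u : EuclideanSpace ℝ (Fin m) // ‖u‖ = 1}, ⟪T u.1, u.1⟫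

/-!
Write `r` for the residual, `D` for the distance to `X*` and `d` for the step, and take all
estimates along the iterations in `K` whose iterate is near `x*`, where `μ_k ≍ r^δ`. Since the
residual vanishes on `X*`, `r = O(D)`, while the error bound gives `D = O(r^q)`; with `q > δ` this
makes `D = o(μ)`, so the curvature shift and the Taylor error, both `O(D²)` on steps of size `D`,
are absorbed by the regularization. At a nearest point of `X*` the gradient of the model is thus off
by `O(D μ)`, and strong monotonicity with modulus `μ` yields `d = O(D)`. The new residual is then
`O(D μ)`, which is `O(r^(δ + q))`, and the error bound turns it into the new distance
`O(D^((1 + δ) q))`. Actual and predicted reduction differ by `O(‖d‖³)`, whereas the prediction is at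
least `μ ‖d‖² / 2`, so the step is accepted, and the superlinear drop of the residual puts the next
iteration into `K`.

These estimates hold only near `x*` and in `K`, but they are self-sustaining: since `D` at least
halves, the step is at most `C (D_k - D_{k+1})`, so the steps telescope and the iterates cannot
leave once they are close enough to `x*`.
-/

section Development

open Asymptotics InnerProductSpace Topology
open ContinuousLinearMap (adjoint)

section Asymptotics

variable {ι : Type*} {l : Filter ι} {u : ι → ℝ} {s t : ℝ}

theorem isLittleO_rpow_rpow_of_lt (hu : Tendsto u l (𝓝 0)) (hu0 : ∀ k, 0 ≤ u k) (hs : 0 ≤ s)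
    (hst : s < t) : (fun k => u k ^ t) =o[l] fun k => u k ^ s := by
  have hsub : Tendsto (fun k => u k ^ (t - s)) l (𝓝 0) := by
    simpa only [Real.zero_rpow (sub_pos.2 hst).ne'] using
      hu.rpow_const (Or.inr (sub_pos.2 hst).le)
  refine (((isLittleO_one_iff ℝ).2 hsub).mul_isBigO (isBigO_refl (fun k => u k ^ s) l)).congr
    (fun k => ?_) fun k => one_mul _
  rw [← Real.rpow_add_of_nonneg (hu0 k) (sub_pos.2 hst).le hs, sub_add_cancel]

theorem isBigO_rpow_rpow_of_le (hu : Tendsto u l (𝓝 0)) (hu0 : ∀ k, 0 ≤ u k) (hs : 0 ≤ s)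
    (hst : s ≤ t) : (fun k => u k ^ t) =O[l] fun k => u k ^ s := by
  rcases hst.eq_or_lt with rfl | hlt
  · exact isBigO_refl _ _
  · exact (isLittleO_rpow_rpow_of_lt hu hu0 hs hlt).isBigO

theorem exists_forall_ge_le_mul_of_isBigO {v w : ℕ → ℝ} (h : v =O[atTop] w) (hw : ∀ k, 0 ≤ w k) :
    ∃ C > (0 : ℝ), ∃ k₀ : ℕ, ∀ k ≥ k₀, v k ≤ C * w k := by
  obtain ⟨C, hC, hvw⟩ := h.exists_pos
  obtain ⟨k₀, hk₀⟩ := eventually_atTop.1 hvw.bound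
  exact ⟨C, hC, k₀, fun k hk =>
    (le_abs_self _).trans ((hk₀ k hk).trans_eq (by rw [Real.norm_of_nonneg (hw k)]))⟩

end Asymptotics

theorem tendsto_and_eventually_mem_of_dist_le_sub {X : Type*} [PseudoMetricSpace X] {x : ℕ → X}
    {K : Set ℕ} {z : X} {V : X → ℝ} (hV : ContinuousAt V z) (hVz : V z = 0) (hV0 : ∀ y, 0 ≤ V y)
    (hz : MapClusterPt z (atTop ⊓ 𝓟 K) x)
    (hstep : ∀ᶠ k in comap x (𝓝 z) ⊓ 𝓟 K,
      k + 1 ∈ K ∧ dist (x (k + 1)) (x k) ≤ V (x k) - V (x (k + 1))) :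
    Tendsto x atTop (𝓝 z) ∧ ∀ᶠ k in atTop, k ∈ K := by
  obtain ⟨δ, hδ, hstep⟩ := ((nhds_basis_ball.comap x).inf_principal K).eventually_iff.1 hstep
  have htrap : ∀ t > 0, ∀ᶠ k in atTop, k ∈ K ∧ dist (x k) z < t := by
    intro t ht
    have hcont : ContinuousAt (fun y => dist y z + V y) z := by fun_prop
    have hnear : ∀ᶠ y in 𝓝 z, dist y z + V y < min t δ :=
      hcont.eventually_lt continuousAt_const (by simp [hVz, ht, hδ])
    obtain ⟨k₀, hk₀, hk₀K⟩ := ((hz.frequently hnear).and_eventually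
      (mem_inf_of_right (mem_principal_self K))).exists
    have hinv : ∀ k ≥ k₀, k ∈ K ∧ dist (x k) z + V (x k) < min t δ := by
      intro k hk
      induction k, hk using Nat.le_induction with
      | base => exact ⟨hk₀K, hk₀⟩
      | succ k _ ih =>
        have hball : dist (x k) z < δ := by linarith [hV0 (x k), ih.2, min_le_right t δ]
        obtain ⟨hmem, hdist⟩ := hstep ⟨hball, ih.1⟩
        exact ⟨hmem, by linarith [dist_triangle (x (k + 1)) (x k) z, ih.2]⟩
    filter_upwards [eventually_ge_atTop k₀] with k hk
    exact ⟨(hinv k hk).1, by linarith [(hinv k hk).2, hV0 (x k), min_le_left t δ]⟩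
  exact ⟨Metric.tendsto_nhds.2 fun t ht => (htrap t ht).mono fun _ h => h.2,
    (htrap 1 one_pos).mono fun _ h => h.1⟩

section Taylor

section NormedSpace

variable {E F : Type*} [NormedAddCommGroup E] [NormedSpace ℝ E] [NormedAddCommGroup F]
  [NormedSpace ℝ F] {z : E}

theorem eventually_forall_mem_segment {Q : E × E → Prop} (hQ : ∀ᶠ p in 𝓝 (z, z), Q p) :
    ∀ᶠ p in 𝓝 (z, z), ∀ y ∈ segment ℝ p.2 p.1, Q (y, p.2) := by
  obtain ⟨ε, hε, hQ⟩ := Metric.eventually_nhds_iff_ball.1 hQ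
  simp only [← ball_prod_same] at hQ
  refine Metric.eventually_nhds_iff_ball.2 ⟨ε, hε, fun p hp y hy => hQ _ ?_⟩
  rw [← ball_prod_same] at hp
  exact ⟨(convex_ball z ε).segment_subset hp.2 hp.1 hy, hp.2⟩

theorem isBigO_sub_sub_fderiv {g : E → F} {g' : E → E →L[ℝ] F}
    (hg : ∀ᶠ x in 𝓝 z, HasFDerivAt g (g' x) x)
    (hlip : (fun p : E × E => g' p.1 - g' p.2) =O[𝓝 (z, z)] fun p => p.1 - p.2) :
    (fun p : E × E => g p.1 - g p.2 - g' p.2 (p.1 - p.2)) =O[𝓝 (z, z)]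
      fun p => ‖p.1 - p.2‖ ^ 2 := by
  obtain ⟨C, hC, hlip⟩ := hlip.exists_nonneg
  refine IsBigO.of_bound C ((eventually_forall_mem_segment
    (hlip.bound.and (continuousAt_fst.eventually hg))).mono fun ⟨v, u⟩ hseg => ?_)
  calc ‖g v - g u - g' u (v - u)‖ ≤ C * ‖v - u‖ * ‖v - u‖ :=
        (convex_segment u v).norm_image_sub_le_of_norm_hasFDerivWithin_le'
          (fun y hy => (hseg y hy).2.hasFDerivWithinAt)
          (fun y hy => (hseg y hy).1.trans
            (mul_le_mul_of_nonneg_left (norm_sub_le_of_mem_segment hy) hC))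
          (left_mem_segment ℝ u v) (right_mem_segment ℝ u v)
    _ = C * ‖‖v - u‖ ^ 2‖ := by rw [norm_pow, norm_norm]; ring

end NormedSpace

variable {E : Type*} [NormedAddCommGroup E] [InnerProductSpace ℝ E] [CompleteSpace E]

theorem hasDerivAt_quadraticRemainder {f : E → ℝ} {u d g₀ g : E} {B : E →L[ℝ] E} {t : ℝ}
    (hf : HasGradientAt f g (u + t • d)) :
    HasDerivAt (fun s : ℝ => f (u + s • d) - s * ⟪g₀, d⟫ - s ^ 2 * (1 / 2 * ⟪d, B d⟫))
      ⟪g - g₀ - B (t • d), d⟫ t := by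
  have hline : HasDerivAt (fun s : ℝ => u + s • d) d t := by
    simpa only [one_smul] using! ((hasDerivAt_id t).smul_const d).const_add u
  have hfline : HasDerivAt (fun s : ℝ => f (u + s • d)) ⟪g, d⟫ t := by
    simpa only [toDual_apply_apply] using! hf.hasFDerivAt.comp_hasDerivAt t hline
  refine ((hfline.sub ((hasDerivAt_id t).mul_const ⟪g₀, d⟫)).sub
    (((hasDerivAt_id t).pow 2).mul_const (1 / 2 * ⟪d, B d⟫))).congr_deriv ?_
  simp only [inner_sub_left, map_smul, real_inner_smul_left, real_inner_comm d (B d), id]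
  ring

theorem isBigO_sub_sub_sub_inner {f : E → ℝ} {f' : E → E} {B : E → E →L[ℝ] E} {z : E}
    (hf : ∀ᶠ x in 𝓝 z, HasGradientAt f (f' x) x)
    (hrem : (fun p : E × E => f' p.1 - f' p.2 - B p.2 (p.1 - p.2)) =O[𝓝 (z, z)]
      fun p => ‖p.1 - p.2‖ ^ 2) :
    (fun p : E × E => f p.1 - f p.2 - ⟪f' p.2, p.1 - p.2⟫
        - 1 / 2 * ⟪p.1 - p.2, B p.2 (p.1 - p.2)⟫) =O[𝓝 (z, z)] fun p => ‖p.1 - p.2‖ ^ 3 := by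
  obtain ⟨C, hC, hrem⟩ := hrem.exists_nonneg
  refine IsBigO.of_bound C ((eventually_forall_mem_segment
    (hrem.bound.and (continuousAt_fst.eventually hf))).mono fun ⟨v, u⟩ hseg => ?_)
  have hline : ∀ t ∈ Set.Icc (0 : ℝ) 1, u + t • (v - u) ∈ segment ℝ u v := by
    intro t ht
    rw [segment_eq_image']
    exact ⟨t, ht, rfl⟩
  have hbound : ∀ t ∈ Set.Ico (0 : ℝ) 1,
      ‖⟪f' (u + t • (v - u)) - f' u - B u (t • (v - u)), v - u⟫‖ ≤ C * ‖v - u‖ ^ 3 := by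
    intro t ht
    have ht1 : ‖t • (v - u)‖ ≤ ‖v - u‖ := by
      rw [norm_smul, Real.norm_of_nonneg ht.1]
      exact mul_le_of_le_one_left (norm_nonneg _) ht.2.le
    have hgrad := (hseg _ (hline t (Set.Ico_subset_Icc_self ht))).1
    simp only [add_sub_cancel_left, norm_pow, norm_norm] at hgrad
    calc _ ≤ C * ‖t • (v - u)‖ ^ 2 * ‖v - u‖ := (norm_inner_le_norm _ _).trans (by gcongr)
      _ ≤ C * ‖v - u‖ ^ 2 * ‖v - u‖ := by gcongr
      _ = C * ‖v - u‖ ^ 3 := by ring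
  have hmvt := norm_image_sub_le_of_norm_deriv_le_segment_01'
    (fun t ht => (hasDerivAt_quadraticRemainder (g₀ := f' u) (B := B u)
      (hseg _ (hline t ht)).2).hasDerivWithinAt) hbound
  simp only [one_smul, zero_smul, add_zero, add_sub_cancel] at hmvt
  rw [norm_pow, norm_norm]
  refine le_of_eq_of_le (congrArg _ ?_) hmvt
  ring

end Taylor

section Gradient

variable {E H : Type*} [NormedAddCommGroup E] [InnerProductSpace ℝ E] [CompleteSpace E]
  [NormedAddCommGroup H] [InnerProductSpace ℝ H] [CompleteSpace H]

theorem contDiff_gradient {ψ : H → ℝ} {j k : WithTop ℕ∞} (hψ : ContDiff ℝ k ψ) (hjk : j + 1 ≤ k) :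
    ContDiff ℝ j (gradient ψ) :=
  (toDual ℝ H).symm.toContinuousLinearEquiv.contDiff.comp (hψ.fderiv_right hjk)

theorem hasGradientAt_comp_clm_sub {ψ : H → ℝ} {A : E →L[ℝ] H} {b : H} {y : E}
    (hψ : DifferentiableAt ℝ ψ (A y - b)) :
    HasGradientAt (fun x => ψ (A x - b)) (adjoint A (gradient ψ (A y - b))) y := by
  rw [hasGradientAt_iff_hasFDerivAt]
  convert! hψ.hasFDerivAt.comp y (A.hasFDerivAt.sub_const b)
  ext v
  rw [toDual_apply_apply, ContinuousLinearMap.adjoint_inner_left, inner_gradient_left]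
  rfl

theorem gradient_comp_clm_sub {ψ : H → ℝ} (hψ : Differentiable ℝ ψ) (A : E →L[ℝ] H) (b : H) :
    gradient (fun x => ψ (A x - b)) = fun y => adjoint A (gradient ψ (A y - b)) :=
  gradient_eq fun y => hasGradientAt_comp_clm_sub (hψ (A y - b))

theorem hasFDerivAt_gradient_comp_clm_sub {ψ : H → ℝ} (hψ : ContDiff ℝ 2 ψ) (A : E →L[ℝ] H)
    (b : H) (y : E) :
    HasFDerivAt (gradient fun x => ψ (A x - b))
      (adjoint A ∘L fderiv ℝ (gradient ψ) (A y - b) ∘L A) y := by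
  have hgrad : Differentiable ℝ (gradient ψ) :=
    (contDiff_gradient hψ one_add_one_eq_two.le).differentiable one_ne_zero
  rw [gradient_comp_clm_sub (hψ.differentiable two_ne_zero)]
  exact (adjoint A).hasFDerivAt.comp y
    ((hgrad _).hasFDerivAt.comp y (A.hasFDerivAt.sub_const b))

end Gradient

section Operator

variable {E : Type*} [NormedAddCommGroup E] [InnerProductSpace ℝ E]

theorem abs_inner_map_self_le (T : E →L[ℝ] E) (u : E) : |⟪T u, u⟫| ≤ ‖T‖ * ‖u‖ ^ 2 :=
  calc |⟪T u, u⟫| ≤ ‖T u‖ * ‖u‖ := abs_real_inner_le_norm _ _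
    _ ≤ ‖T‖ * ‖u‖ * ‖u‖ := by gcongr; exact T.le_opNorm u
    _ = ‖T‖ * ‖u‖ ^ 2 := by ring

theorem mul_norm_le_of_inner_nonneg {G : E →L[ℝ] E} {e u w : E} {μ : ℝ} (hμ : 0 ≤ μ)
    (hG : μ * ‖u‖ ^ 2 ≤ ⟪G u, u⟫) (h : 0 ≤ ⟪e - G u + w, u - e⟫) :
    μ * ‖u‖ ≤ (‖G‖ + 1 + μ) * ‖e‖ + 2 * ‖w‖ := by
  rcases le_or_gt ‖u‖ ‖e‖ with hue | hue
  · calc μ * ‖u‖ ≤ μ * ‖e‖ := by gcongr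
      _ ≤ μ * ‖e‖ + ((‖G‖ + 1) * ‖e‖ + 2 * ‖w‖) := le_add_of_nonneg_right (by positivity)
      _ = _ := by ring
  · have hexp : ⟪e - G u + w, u - e⟫
        = ⟪e, u⟫ - ‖e‖ ^ 2 - ⟪G u, u⟫ + ⟪G u, e⟫ + ⟪w, u - e⟫ := by
      simp only [inner_sub_right, inner_add_left, inner_sub_left, real_inner_self_eq_norm_sq]
      ring
    have heu : ⟪e, u⟫ ≤ ‖e‖ * ‖u‖ := real_inner_le_norm e u
    have hGe : ⟪G u, e⟫ ≤ ‖G‖ * ‖u‖ * ‖e‖ :=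
      (real_inner_le_norm _ _).trans (by gcongr; exact G.le_opNorm u)
    have hwu : ⟪w, u - e⟫ ≤ ‖w‖ * (2 * ‖u‖) :=
      (real_inner_le_norm _ _).trans (by gcongr; linarith [norm_sub_le u e])
    have hmul : ‖u‖ * (μ * ‖u‖) ≤ ‖u‖ * ((‖G‖ + 1) * ‖e‖ + 2 * ‖w‖) := by
      nlinarith [sq_nonneg ‖e‖]
    have := le_of_mul_le_mul_left hmul ((norm_nonneg e).trans_lt hue)
    linarith [mul_nonneg hμ (norm_nonneg e)]

variable {m : ℕ} (T : EuclideanSpace ℝ (Fin m) →L[ℝ] EuclideanSpace ℝ (Fin m))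

theorem lambdaMin_mul_sq_norm_le_inner (u : EuclideanSpace ℝ (Fin m)) :
    lambdaMin T * ‖u‖ ^ 2 ≤ ⟪T u, u⟫ := by
  rcases eq_or_ne u 0 with rfl | hu
  · simp
  have hbdd : BddBelow (Set.range fun v : {v : EuclideanSpace ℝ (Fin m) // ‖v‖ = 1} =>
      ⟪T v.1, v.1⟫) := by
    refine ⟨-‖T‖, ?_⟩
    rintro _ ⟨⟨v, hv⟩, rfl⟩
    simpa [hv] using (abs_le.1 (abs_inner_map_self_le T v)).1
  have hunit := ciInf_le hbdd ⟨‖u‖⁻¹ • u, norm_smul_inv_norm hu⟩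
  simp only [map_smul, real_inner_smul_left, real_inner_smul_right] at hunit
  calc lambdaMin T * ‖u‖ ^ 2 ≤ (‖u‖⁻¹ * (‖u‖⁻¹ * ⟪T u, u⟫)) * ‖u‖ ^ 2 := by gcongr; exact hunit
    _ = ⟪T u, u⟫ := by field_simp [norm_ne_zero_iff.2 hu]

theorem max_neg_lambdaMin_le_norm_sub {S : EuclideanSpace ℝ (Fin m) →L[ℝ] EuclideanSpace ℝ (Fin m)}
    (hS : ∀ u, 0 ≤ ⟪S u, u⟫) : max (-lambdaMin T) 0 ≤ ‖T - S‖ := by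
  refine max_le (neg_le.1 ?_) (norm_nonneg _)
  rcases isEmpty_or_nonempty {u : EuclideanSpace ℝ (Fin m) // ‖u‖ = 1} with hempty | hne
  · rw [lambdaMin, Real.iInf_of_isEmpty]
    exact neg_nonpos.2 (norm_nonneg _)
  · refine le_ciInf fun ⟨u, hu⟩ => ?_
    have hTS := (abs_le.1 (abs_inner_map_self_le (T - S) u)).1
    rw [sub_apply, inner_sub_left, hu] at hTS
    linarith [hS u]

end Operator

section Prox

theorem exists_forall_add_half_sq_norm_sub_le {E : Type*} [NormedAddCommGroup E] [NormedSpace ℝ E]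
    [FiniteDimensional ℝ E] {φ : E → ℝ} (hφ : ConvexOn ℝ Set.univ φ) (z : E) :
    ∃ p, ∀ y, φ p + 1 / 2 * ‖p - z‖ ^ 2 ≤ φ y + 1 / 2 * ‖y - z‖ ^ 2 := by
  have hcont : Continuous φ := continuousOn_univ.1 (hφ.continuousOn isOpen_univ)
  obtain ⟨l, c, hle, heq⟩ := hφ.exists_affine_le_of_lt (𝕜 := ℝ) (Set.mem_univ z)
    (sub_one_lt (φ z)) isClosed_univ hcont.continuousOn.lowerSemicontinuousOn
  have haffine : ∀ y, φ z - 1 - ‖l‖ * ‖y - z‖ ≤ φ y := by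
    intro y
    have hly : l y + c ≤ φ y := hle ⟨y, Set.mem_univ y⟩
    have hlz : l z + c = φ z - 1 := heq
    have hnorm := (abs_le.1 (l.le_opNorm (y - z))).1
    rw [map_sub] at hnorm
    linarith
  have := FiniteDimensional.proper ℝ E
  refine (by fun_prop : Continuous fun y => φ y + 1 / 2 * ‖y - z‖ ^ 2).exists_forall_le' z ?_
  filter_upwards [(isCompact_closedBall z (2 * (‖l‖ + 1))).compl_mem_cocompact] with y hy
  have hfar : 2 * (‖l‖ + 1) < ‖y - z‖ := by
    simpa only [Set.mem_compl_iff, mem_closedBall, dist_eq_norm, not_le] using hy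
  rw [sub_self, norm_zero]
  nlinarith [haffine y, norm_nonneg l]

variable {n : ℕ} {φ : EuclideanSpace ℝ (Fin n) → ℝ}

theorem sub_mem_subdiff_of_forall_le (hφ : ConvexOn ℝ Set.univ φ) {p z : EuclideanSpace ℝ (Fin n)}
    (hp : ∀ y, φ p + 1 / 2 * ‖p - z‖ ^ 2 ≤ φ y + 1 / 2 * ‖y - z‖ ^ 2) : z - p ∈ subdiff φ p := by
  intro y
  have hlim : Tendsto (fun t : ℝ => φ y + t * (1 / 2 * ‖y - p‖ ^ 2)) (𝓝[>] 0) (𝓝 (φ y)) := by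
    refine Tendsto.mono_left ?_ nhdsWithin_le_nhds
    exact (by fun_prop : Continuous fun t : ℝ => φ y + t * (1 / 2 * ‖y - p‖ ^ 2)).tendsto' _ _
      (by rw [zero_mul, add_zero])
  refine ge_of_tendsto hlim ?_
  filter_upwards [Ioc_mem_nhdsGT (zero_lt_one' ℝ)] with t ⟨ht0, ht1⟩
  have hmin := hp ((1 - t) • p + t • y)
  have hconv := hφ.2 (Set.mem_univ p) (Set.mem_univ y) (sub_nonneg.2 ht1) ht0.le
    (sub_add_cancel 1 t)
  rw [show (1 - t) • p + t • y - z = p - z + t • (y - p) by module, norm_add_sq_real, norm_smul,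
    real_inner_smul_right, Real.norm_of_nonneg ht0.le] at hmin
  rw [smul_eq_mul, smul_eq_mul] at hconv
  rw [← neg_sub p z, inner_neg_left]
  exact le_of_mul_le_mul_left (by linarith) ht0

theorem sub_proxPt_mem_subdiff (hφ : ConvexOn ℝ Set.univ φ) (z : EuclideanSpace ℝ (Fin n)) :
    z - proxPt φ z ∈ subdiff φ (proxPt φ z) :=
  sub_mem_subdiff_of_forall_le hφ
    (Classical.epsilon_spec (exists_forall_add_half_sq_norm_sub_le hφ z))

theorem inner_sub_nonneg_of_mem_subdiff {p q v w : EuclideanSpace ℝ (Fin n)}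
    (hv : v ∈ subdiff φ p) (hw : w ∈ subdiff φ q) : 0 ≤ ⟪v - w, p - q⟫ := by
  have hpq := hv q
  have hqp := hw p
  rw [← neg_sub p q, inner_neg_right] at hpq
  rw [inner_sub_left]
  linarith

theorem norm_proxPt_sub_proxPt_le (hφ : ConvexOn ℝ Set.univ φ) (z w : EuclideanSpace ℝ (Fin n)) :
    ‖proxPt φ z - proxPt φ w‖ ≤ ‖z - w‖ := by
  set d := proxPt φ z - proxPt φ w with hd
  have hmono := inner_sub_nonneg_of_mem_subdiff (sub_proxPt_mem_subdiff hφ z)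
    (sub_proxPt_mem_subdiff hφ w)
  rw [sub_sub_sub_comm, ← hd, inner_sub_left, real_inner_self_eq_norm_sq] at hmono
  rcases (norm_nonneg d).eq_or_lt with h0 | hpos
  · exact h0 ▸ norm_nonneg _
  · exact le_of_mul_le_mul_right (by linarith [real_inner_le_norm (z - w) d]) hpos

theorem proxPt_eq_of_sub_mem_subdiff (hφ : ConvexOn ℝ Set.univ φ) {p z : EuclideanSpace ℝ (Fin n)}
    (hp : z - p ∈ subdiff φ p) : proxPt φ z = p := by
  have hmono := inner_sub_nonneg_of_mem_subdiff (sub_proxPt_mem_subdiff hφ z) hp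
  rw [sub_sub_sub_cancel_left, ← neg_sub, inner_neg_left, real_inner_self_eq_norm_sq,
    neg_nonneg] at hmono
  exact sub_eq_zero.1 (norm_eq_zero.1 (pow_eq_zero_iff two_ne_zero |>.1
    (hmono.antisymm (sq_nonneg _))))

/-- The prox-gradient residual `y − prox_φ(y − v)` at `y` of the inclusion `0 ∈ v + ∂φ(y)`. With
`v = ∇f(y)` it is `r(y)`; with `v` the gradient of the smooth part of a regularized quadratic model
it is the subproblem residual `R_k(y)`. -/
def proxGradResid (φ : EuclideanSpace ℝ (Fin n) → ℝ) (v y : EuclideanSpace ℝ (Fin n)) :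
    EuclideanSpace ℝ (Fin n) :=
  y - proxPt φ (y - v)

theorem proxGradResid_eq_zero (hφ : ConvexOn ℝ Set.univ φ) {v y : EuclideanSpace ℝ (Fin n)}
    (hv : -v ∈ subdiff φ y) : proxGradResid φ v y = 0 :=
  sub_eq_zero.2 (proxPt_eq_of_sub_mem_subdiff hφ
    (by rwa [sub_sub_cancel_left])).symm

theorem norm_proxGradResid_sub_le (hφ : ConvexOn ℝ Set.univ φ)
    (v v' y y' : EuclideanSpace ℝ (Fin n)) :
    ‖proxGradResid φ v y - proxGradResid φ v' y'‖ ≤ 2 * ‖y - y'‖ + ‖v - v'‖ :=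
  calc ‖proxGradResid φ v y - proxGradResid φ v' y'‖
      = ‖y - y' - (proxPt φ (y - v) - proxPt φ (y' - v'))‖ := by
        rw [proxGradResid, proxGradResid, sub_sub_sub_comm]
    _ ≤ ‖y - y'‖ + ‖y - v - (y' - v')‖ :=
        (norm_sub_le _ _).trans (by gcongr; exact norm_proxPt_sub_proxPt_le hφ _ _)
    _ = ‖y - y'‖ + ‖y - y' - (v - v')‖ := by rw [sub_sub_sub_comm]
    _ ≤ ‖y - y'‖ + (‖y - y'‖ + ‖v - v'‖) := by gcongr; exact norm_sub_le _ _
    _ = 2 * ‖y - y'‖ + ‖v - v'‖ := by ring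

theorem inner_proxGradResid_nonneg (hφ : ConvexOn ℝ Set.univ φ)
    {v v₀ y z : EuclideanSpace ℝ (Fin n)} (hz : -v₀ ∈ subdiff φ z) :
    0 ≤ ⟪proxGradResid φ v y - v + v₀, y - z - proxGradResid φ v y⟫ := by
  have hmono := inner_sub_nonneg_of_mem_subdiff (sub_proxPt_mem_subdiff hφ (y - v)) hz
  convert hmono using 2 <;> rw [proxGradResid] <;> abel

end Prox

variable {n m : ℕ}

/-- The composite problem `min ψ(Ax − b) + φ(x)` over `ℝⁿ` with `ψ` twice continuously
differentiable and `φ` convex. -/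
structure CompositeProblem (n m : ℕ) where
  ψ : EuclideanSpace ℝ (Fin m) → ℝ
  A : EuclideanSpace ℝ (Fin n) →L[ℝ] EuclideanSpace ℝ (Fin m)
  b : EuclideanSpace ℝ (Fin m)
  φ : EuclideanSpace ℝ (Fin n) → ℝ
  contDiff_ψ : ContDiff ℝ 2 ψ
  convexOn_φ : ConvexOn ℝ Set.univ φ

namespace CompositeProblem

variable (P : CompositeProblem n m)

/-- The smooth part `f(x) = ψ(Ax − b)` of the objective. -/
def f : EuclideanSpace ℝ (Fin n) → ℝ := fun x => P.ψ (P.A x - P.b)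

/-- The objective `F = f + φ`. -/
def F (x : EuclideanSpace ℝ (Fin n)) : ℝ := P.f x + P.φ x

/-- The norm of the prox-gradient residual `r(x)`. -/
def residNorm (x : EuclideanSpace ℝ (Fin n)) : ℝ := ‖resid P.f P.φ x‖

/-- The outer Hessian `∇²ψ(Ax − b)`. -/
def outerHess (x : EuclideanSpace ℝ (Fin n)) :
    EuclideanSpace ℝ (Fin m) →L[ℝ] EuclideanSpace ℝ (Fin m) :=
  fderiv ℝ (gradient P.ψ) (P.A x - P.b)

/-- The Hessian `∇²f(x)`. -/
def hess (x : EuclideanSpace ℝ (Fin n)) :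
    EuclideanSpace ℝ (Fin n) →L[ℝ] EuclideanSpace ℝ (Fin n) :=
  fderiv ℝ (gradient P.f) x

/-- The curvature shift `Λ = a·[−λ_min(∇²ψ(Ax − b))]₊`, which makes `∇²f(x) + Λ AᵀA` positive
semidefinite when `a ≥ 1`. -/
def shift (a : ℝ) (x : EuclideanSpace ℝ (Fin n)) : ℝ := a * max (-lambdaMin (P.outerHess x)) 0

/-- The regularized Hessian `G = ∇²f(x) + Λ AᵀA + μ I`. -/
def regHess (a μ : ℝ) (x : EuclideanSpace ℝ (Fin n)) :
    EuclideanSpace ℝ (Fin n) →L[ℝ] EuclideanSpace ℝ (Fin n) :=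
  P.hess x + P.shift a x • (adjoint P.A ∘L P.A) + μ • ContinuousLinearMap.id ℝ _

/-- The value at `y` of the model of `F` around `x` that keeps `φ` and replaces `f` by its second
order expansion with the operator `H` in place of the Hessian. -/
def model (H : EuclideanSpace ℝ (Fin n) →L[ℝ] EuclideanSpace ℝ (Fin n))
    (x y : EuclideanSpace ℝ (Fin n)) : ℝ :=
  P.f x + ⟪gradient P.f x, y - x⟫ + 1 / 2 * ⟪y - x, H (y - x)⟫ + P.φ y

/-- The set `X*` of strongly stationary points: `0 ∈ ∇f(x) + ∂φ(x)` and `∇²ψ(Ax − b)` is positive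
semidefinite. -/
def stronglyStationary : Set (EuclideanSpace ℝ (Fin n)) :=
  {x | -gradient P.f x ∈ subdiff P.φ x ∧ ∀ u, 0 ≤ ⟪P.outerHess x u, u⟫}

/-- A nearest strongly stationary point to `x`. It is not unique, since `X*` need not be convex;
any selection will do. -/
def nearest (x : EuclideanSpace ℝ (Fin n)) : EuclideanSpace ℝ (Fin n) :=
  Classical.epsilon fun y => y ∈ P.stronglyStationary ∧ infDist x P.stronglyStationary = dist x y

theorem residNorm_nonneg (x : EuclideanSpace ℝ (Fin n)) : 0 ≤ P.residNorm x := norm_nonneg _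

theorem continuous_φ : Continuous P.φ :=
  continuousOn_univ.1 (P.convexOn_φ.continuousOn isOpen_univ)

theorem contDiff_gradient_ψ : ContDiff ℝ 1 (gradient P.ψ) :=
  contDiff_gradient P.contDiff_ψ one_add_one_eq_two.le

theorem hasGradientAt_f (x : EuclideanSpace ℝ (Fin n)) : HasGradientAt P.f (gradient P.f x) x :=
  (hasGradientAt_comp_clm_sub
    (P.contDiff_ψ.differentiable two_ne_zero _)).differentiableAt.hasGradientAt

theorem hess_eq (x : EuclideanSpace ℝ (Fin n)) :
    P.hess x = adjoint P.A ∘L P.outerHess x ∘L P.A :=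
  (hasFDerivAt_gradient_comp_clm_sub P.contDiff_ψ P.A P.b x).fderiv

theorem hasFDerivAt_gradient_f (x : EuclideanSpace ℝ (Fin n)) :
    HasFDerivAt (gradient P.f) (P.hess x) x :=
  (hasFDerivAt_gradient_comp_clm_sub P.contDiff_ψ P.A P.b x).differentiableAt.hasFDerivAt

theorem continuous_outerHess : Continuous P.outerHess :=
  (P.contDiff_gradient_ψ.continuous_fderiv one_ne_zero).comp (by fun_prop)

theorem continuous_hess : Continuous P.hess := by
  rw [funext P.hess_eq]
  exact continuous_const.clm_comp (P.continuous_outerHess.clm_comp continuous_const)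

theorem continuous_gradient_f : Continuous (gradient P.f) :=
  continuous_iff_continuousAt.2 fun x => (P.hasFDerivAt_gradient_f x).continuousAt

theorem isBigO_gradient_sub (z : EuclideanSpace ℝ (Fin n)) :
    (fun p : EuclideanSpace ℝ (Fin n) × EuclideanSpace ℝ (Fin n) =>
      gradient P.f p.1 - gradient P.f p.2) =O[𝓝 (z, z)] fun p => p.1 - p.2 :=
  (hasStrictFDerivAt_of_hasFDerivAt_of_continuousAt
    (Eventually.of_forall P.hasFDerivAt_gradient_f) P.continuous_hess.continuousAt).isBigO_sub

theorem isClosed_stronglyStationary : IsClosed P.stronglyStationary := by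
  have hφ := P.continuous_φ
  have hg := P.continuous_gradient_f
  have hH := P.continuous_outerHess
  have hsubdiff (y : EuclideanSpace ℝ (Fin n)) :
      IsClosed {x | P.φ x + ⟪-gradient P.f x, y - x⟫ ≤ P.φ y} :=
    isClosed_le (by fun_prop) (by fun_prop)
  have hpsd (u : EuclideanSpace ℝ (Fin m)) : IsClosed {x | 0 ≤ ⟪P.outerHess x u, u⟫} :=
    isClosed_le (by fun_prop) (by fun_prop)
  convert (isClosed_iInter hsubdiff).inter (isClosed_iInter hpsd) using 1
  ext x
  simp [stronglyStationary, subdiff]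

theorem nearest_spec (hne : P.stronglyStationary.Nonempty) (x : EuclideanSpace ℝ (Fin n)) :
    P.nearest x ∈ P.stronglyStationary ∧
      infDist x P.stronglyStationary = dist x (P.nearest x) :=
  Classical.epsilon_spec (P.isClosed_stronglyStationary.exists_infDist_eq_dist hne x)

theorem shift_nonneg {a : ℝ} (ha : 0 ≤ a) (x : EuclideanSpace ℝ (Fin n)) : 0 ≤ P.shift a x :=
  mul_nonneg ha (le_max_right _ _)

theorem inner_hess (x u : EuclideanSpace ℝ (Fin n)) :
    ⟪P.hess x u, u⟫ = ⟪P.outerHess x (P.A u), P.A u⟫ := by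
  rw [hess_eq, ContinuousLinearMap.comp_apply, ContinuousLinearMap.adjoint_inner_left,
    ContinuousLinearMap.comp_apply]

theorem inner_regHess (a μ : ℝ) (x u : EuclideanSpace ℝ (Fin n)) :
    ⟪P.regHess a μ x u, u⟫ = ⟪P.hess x u, u⟫ + P.shift a x * ‖P.A u‖ ^ 2 + μ * ‖u‖ ^ 2 := by
  simp only [regHess, add_apply, smul_apply, ContinuousLinearMap.comp_apply, inner_add_left,
    real_inner_smul_left, ContinuousLinearMap.adjoint_inner_left, ContinuousLinearMap.id_apply,
    real_inner_self_eq_norm_sq]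

theorem mul_sq_norm_le_inner_regHess {a : ℝ} (ha : 1 ≤ a) (μ : ℝ)
    (x u : EuclideanSpace ℝ (Fin n)) : μ * ‖u‖ ^ 2 ≤ ⟪P.regHess a μ x u, u⟫ := by
  have hmin := lambdaMin_mul_sq_norm_le_inner (P.outerHess x) (P.A u)
  have hshift : -lambdaMin (P.outerHess x) ≤ P.shift a x :=
    (le_max_left _ 0).trans (le_mul_of_one_le_left (le_max_right _ _) ha)
  rw [inner_regHess, inner_hess]
  nlinarith [sq_nonneg ‖P.A u‖]

theorem model_regHess (a μ : ℝ) (x y : EuclideanSpace ℝ (Fin n)) :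
    P.model (P.regHess a μ x) x y = P.model (P.hess x) x y
      + 1 / 2 * (P.shift a x * ‖P.A (y - x)‖ ^ 2 + μ * ‖y - x‖ ^ 2) := by
  rw [model, model, real_inner_comm _ (y - x), inner_regHess, real_inner_comm _ (y - x)]
  ring

/-- The local assumptions at `z = x*`: strong stationarity, local Lipschitz continuity of
`∇²ψ(Ax − b)`, and the Hölderian error bound `dist(x, X*) = O(‖r(x)‖^q)`. -/
structure LocalErrorBound (z : EuclideanSpace ℝ (Fin n)) (q : ℝ) : Prop where
  mem_stronglyStationary : z ∈ P.stronglyStationary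
  isBigO_outerHess_sub :
    (fun p : EuclideanSpace ℝ (Fin n) × EuclideanSpace ℝ (Fin n) =>
      P.outerHess p.1 - P.outerHess p.2) =O[𝓝 (z, z)] fun p => p.1 - p.2
  isBigO_infDist :
    (fun x => infDist x P.stronglyStationary) =O[𝓝 z] fun x => P.residNorm x ^ q

variable {P} {z : EuclideanSpace ℝ (Fin n)} {q : ℝ}

theorem LocalErrorBound.of_closedBall {ε Lψ β : ℝ} (hε : 0 < ε) (hβ : 0 < β)
    (hmem : z ∈ P.stronglyStationary)
    (hlip : ∀ u ∈ closedBall z ε, ∀ v ∈ closedBall z ε,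
      ‖P.outerHess u - P.outerHess v‖ ≤ Lψ * ‖P.A u - P.A v‖)
    (herr : ∀ y ∈ closedBall z ε, β * infDist y P.stronglyStationary ≤ P.residNorm y ^ q) :
    P.LocalErrorBound z q where
  mem_stronglyStationary := hmem
  isBigO_outerHess_sub := by
    have hA : (fun p : EuclideanSpace ℝ (Fin n) × EuclideanSpace ℝ (Fin n) => P.A p.1 - P.A p.2)
        =O[𝓝 (z, z)] fun p => p.1 - p.2 := by
      simpa only [map_sub] using P.A.isBigO_comp
        (fun p : EuclideanSpace ℝ (Fin n) × EuclideanSpace ℝ (Fin n) => p.1 - p.2) _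
    refine IsBigO.trans (IsBigO.of_bound Lψ ?_) hA
    filter_upwards [prod_mem_nhds (closedBall_mem_nhds z hε) (closedBall_mem_nhds z hε)] with p hp
    exact hlip p.1 hp.1 p.2 hp.2
  isBigO_infDist := by
    refine IsBigO.of_bound β⁻¹ ?_
    filter_upwards [closedBall_mem_nhds z hε] with y hy
    rw [Real.norm_of_nonneg infDist_nonneg,
      Real.norm_of_nonneg (Real.rpow_nonneg (P.residNorm_nonneg y) q), le_inv_mul_iff₀ hβ]
    exact herr y hy

theorem LocalErrorBound.isBigO_gradient_sub_sub_hess (hz : P.LocalErrorBound z q) :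
    (fun p : EuclideanSpace ℝ (Fin n) × EuclideanSpace ℝ (Fin n) =>
      gradient P.f p.1 - gradient P.f p.2 - P.hess p.2 (p.1 - p.2)) =O[𝓝 (z, z)]
      fun p => ‖p.1 - p.2‖ ^ 2 := by
  refine isBigO_sub_sub_fderiv (Eventually.of_forall P.hasFDerivAt_gradient_f) ?_
  refine IsBigO.trans (IsBigO.of_bound (‖adjoint P.A‖ * ‖P.A‖) (Eventually.of_forall fun p => ?_))
    hz.isBigO_outerHess_sub
  rw [hess_eq, hess_eq, ← ContinuousLinearMap.comp_sub, ← ContinuousLinearMap.sub_comp]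
  calc _ ≤ ‖adjoint P.A‖ * (‖P.outerHess p.1 - P.outerHess p.2‖ * ‖P.A‖) :=
        (ContinuousLinearMap.opNorm_comp_le _ _).trans
          (by gcongr; exact ContinuousLinearMap.opNorm_comp_le _ _)
    _ = _ := by ring

end CompositeProblem

/-- The parameters of the regularized proximal Newton method and the sequences it generates: the
iterates `x`, the inexact subproblem solutions `xhat`, the weights `ν`, and the reference values
`rbar` of the residual norm. `IsRun` says that they obey the rules of the method. -/
structure RegProxNewton (n : ℕ) where
  (c₁ c₂ σ₁ σ₂ η θ α a νmin νbar δ τ pmin κ : ℝ)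
  (x xhat : ℕ → EuclideanSpace ℝ (Fin n))
  (ν rbar : ℕ → ℝ)

namespace RegProxNewton

variable (S : RegProxNewton n) (P : CompositeProblem n m)

/-- The residual norm `‖r(xᵏ)‖`. -/
def r (k : ℕ) : ℝ := P.residNorm (S.x k)

/-- The distance `dist(xᵏ, X*)`. -/
def D (k : ℕ) : ℝ := infDist (S.x k) P.stronglyStationary

/-- The step `dᵏ = x̂ᵏ − xᵏ`. -/
def d (k : ℕ) : EuclideanSpace ℝ (Fin n) := S.xhat k - S.x k

/-- The regularization parameter `μ_k = ν_k r̄_k^δ`. -/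
def μ (k : ℕ) : ℝ := S.ν k * S.rbar k ^ S.δ

/-- The regularized Hessian `G_k`. -/
def G (k : ℕ) : EuclideanSpace ℝ (Fin n) →L[ℝ] EuclideanSpace ℝ (Fin n) :=
  P.regHess S.a (S.μ k) (S.x k)

/-- The subproblem residual `R_k(x̂ᵏ)`. -/
def subproblemResid (k : ℕ) : EuclideanSpace ℝ (Fin n) :=
  S.xhat k - proxPt P.φ (S.xhat k - gradient P.f (S.x k) - S.G P k (S.d k))

/-- The predicted reduction `pred_k = F(xᵏ) − q_k(x̂ᵏ)`. -/
def pred (k : ℕ) : ℝ := P.F (S.x k) - P.model (P.hess (S.x k)) (S.x k) (S.xhat k)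

/-- The actual reduction `ared_k = F(xᵏ) − F(x̂ᵏ)`. -/
def ared (k : ℕ) : ℝ := P.F (S.x k) - P.F (S.xhat k)

/-- Iteration `k` fails one of the two acceptance tests: on the size of the predicted reduction,
and on the ratio `ρ_k`. -/
def Unsuccessful (k : ℕ) : Prop :=
  S.pred P k ≤ S.pmin * (1 - S.θ) * ‖S.d k‖ * min (S.r P k) (S.r P k ^ S.κ) ∨
    S.ared P k / S.pred P k ≤ S.c₁

/-- The index set `K` of the iterations that start with an updated reference value `r̄_k`. -/
def K : Set ℕ := {0} ∪ {k | 1 ≤ k ∧ S.r P k ≤ S.η * S.rbar (k - 1)}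

/-- The rules of the method, for a run that never meets a stationary point. -/
structure IsRun : Prop where
  c₁_lt_one : S.c₁ < 1
  one_le_σ₂ : 1 ≤ S.σ₂
  η_pos : 0 < S.η
  η_lt_one : S.η < 1
  θ_nonneg : 0 ≤ S.θ
  θ_lt_one : S.θ < 1
  α_nonneg : 0 ≤ S.α
  one_le_a : 1 ≤ S.a
  νmin_pos : 0 < S.νmin
  νmin_le_ν_zero : S.νmin ≤ S.ν 0
  ν_zero_le_νbar : S.ν 0 ≤ S.νbar
  δ_pos : 0 < S.δ
  δ_le_τ : S.δ ≤ S.τ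
  one_add_δ_lt_κ : 1 + S.δ < S.κ
  resid_ne_zero : ∀ k, resid P.f P.φ (S.x k) ≠ 0
  norm_subproblemResid_le : ∀ k,
    ‖S.subproblemResid P k‖ ≤ S.θ * min (S.r P k) (S.r P k ^ (1 + S.τ))
  le_sub_model : ∀ k, S.α * S.μ k / 2 * ‖S.d k‖ ^ 2
    ≤ P.F (S.x k) - P.model (S.G P k) (S.x k) (S.xhat k)
  update : ∀ k,
    (S.Unsuccessful P k → S.x (k + 1) = S.x k ∧ S.ν (k + 1) = S.σ₂ * S.ν k) ∧
    (¬S.Unsuccessful P k → S.x (k + 1) = S.xhat k ∧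
      (S.ared P k / S.pred P k ≤ S.c₂ → S.ν (k + 1) = min (S.ν k) S.νbar) ∧
      (S.c₂ < S.ared P k / S.pred P k →
        S.ν (k + 1) = min (max (S.σ₁ * S.ν k) S.νmin) S.νbar))
  rbar_zero : S.rbar 0 = S.r P 0
  rbar_update : ∀ k,
    (S.r P (k + 1) ≤ S.η * S.rbar k → S.rbar (k + 1) = S.r P (k + 1)) ∧
    (¬S.r P (k + 1) ≤ S.η * S.rbar k → S.rbar (k + 1) = S.rbar k)

/-- The iterations in `K` whose iterate is close to `z`, as a filter. -/
def near (z : EuclideanSpace ℝ (Fin n)) : Filter ℕ := comap S.x (𝓝 z) ⊓ 𝓟 (S.K P)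

variable {S P}

theorem subproblemResid_eq_proxGradResid (k : ℕ) : S.subproblemResid P k =
    proxGradResid P.φ (gradient P.f (S.x k) + S.G P k (S.d k)) (S.xhat k) := by
  rw [subproblemResid, proxGradResid, sub_sub]

theorem D_nonneg (k : ℕ) : 0 ≤ S.D P k := infDist_nonneg

theorem tendsto_x_near {z : EuclideanSpace ℝ (Fin n)} : Tendsto S.x (S.near P z) (𝓝 z) :=
  tendsto_comap.mono_left inf_le_left

theorem eventually_mem_K_near {z : EuclideanSpace ℝ (Fin n)} : ∀ᶠ k in S.near P z, k ∈ S.K P :=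
  mem_inf_of_right (mem_principal_self _)

section Near

variable {z : EuclideanSpace ℝ (Fin n)} {q : ℝ} (hz : P.LocalErrorBound z q)

include hz

theorem tendsto_D_near : Tendsto (S.D P) (S.near P z) (𝓝 0) := by
  have hcont := (continuous_infDist_pt P.stronglyStationary).tendsto z
  rw [infDist_zero_of_mem hz.mem_stronglyStationary] at hcont
  exact hcont.comp tendsto_x_near

theorem nearest_mem (k : ℕ) : P.nearest (S.x k) ∈ P.stronglyStationary :=
  (P.nearest_spec ⟨z, hz.mem_stronglyStationary⟩ _).1

theorem norm_nearest_sub (k : ℕ) : ‖P.nearest (S.x k) - S.x k‖ = S.D P k := by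
  rw [← dist_eq_norm, dist_comm]
  exact (P.nearest_spec ⟨z, hz.mem_stronglyStationary⟩ _).2.symm

theorem isBigO_nearest_sub :
    (fun k => P.nearest (S.x k) - S.x k) =O[S.near P z] S.D P :=
  isBigO_of_le _ fun k => by rw [norm_nearest_sub hz, Real.norm_of_nonneg (D_nonneg k)]

theorem tendsto_near_of_isBigO_sub {y : ℕ → EuclideanSpace ℝ (Fin n)}
    (hy : (fun k => y k - S.x k) =O[S.near P z] S.D P) : Tendsto y (S.near P z) (𝓝 z) := by
  simpa only [sub_add_cancel, zero_add] using
    (hy.trans_tendsto (tendsto_D_near hz)).add tendsto_x_near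

theorem isBigO_r_D : S.r P =O[S.near P z] S.D P := by
  have hsub := isBigO_nearest_sub (S := S) hz
  have hgrad := (P.isBigO_gradient_sub z).comp_tendsto
    ((tendsto_near_of_isBigO_sub hz hsub).prodMk_nhds tendsto_x_near)
  refine IsBigO.trans (isBigO_of_le _ fun k => ?_)
    ((hsub.norm_left.const_mul_left 2).add (hgrad.trans hsub).norm_left)
  have hlip := norm_proxGradResid_sub_le P.convexOn_φ (gradient P.f (P.nearest (S.x k)))
    (gradient P.f (S.x k)) (P.nearest (S.x k)) (S.x k)
  rw [proxGradResid_eq_zero P.convexOn_φ (nearest_mem hz k).1, zero_sub, norm_neg] at hlip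
  rw [r, CompositeProblem.residNorm, norm_norm]
  exact hlip.trans (le_abs_self _)

theorem isBigO_D_rpow_r : S.D P =O[S.near P z] fun k => S.r P k ^ q :=
  hz.isBigO_infDist.comp_tendsto tendsto_x_near

theorem tendsto_r_near : Tendsto (S.r P) (S.near P z) (𝓝 0) :=
  (isBigO_r_D hz).trans_tendsto (tendsto_D_near hz)

theorem isBigO_shift_D : (fun k => P.shift S.a (S.x k)) =O[S.near P z] S.D P := by
  have hlip := hz.isBigO_outerHess_sub.comp_tendsto
    (tendsto_x_near.prodMk_nhds (tendsto_near_of_isBigO_sub hz (isBigO_nearest_sub (S := S) hz)))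
  have hsub : (fun k => S.x k - P.nearest (S.x k)) =O[S.near P z] S.D P :=
    (isBigO_nearest_sub hz).neg_left.congr_left fun k => neg_sub _ _
  refine (IsBigO.of_bound' (Eventually.of_forall fun k => ?_)).const_mul_left S.a
    |>.trans (hlip.trans hsub)
  rw [Real.norm_of_nonneg (le_max_right _ _)]
  exact max_neg_lambdaMin_le_norm_sub _ (nearest_mem hz k).2

end Near

namespace IsRun

variable (hS : S.IsRun P)

include hS

theorem ν_succ_mem_Icc {k : ℕ} (hk : ¬S.Unsuccessful P k) (hν : S.νmin ≤ S.ν k) :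
    S.ν (k + 1) ∈ Set.Icc S.νmin S.νbar := by
  have hbar := hS.νmin_le_ν_zero.trans hS.ν_zero_le_νbar
  obtain ⟨_, hle, hlt⟩ := (hS.update k).2 hk
  rcases le_or_gt (S.ared P k / S.pred P k) S.c₂ with hρ | hρ
  · rw [hle hρ]
    exact ⟨le_min hν hbar, min_le_right _ _⟩
  · rw [hlt hρ]
    exact ⟨le_min (le_max_right _ _) hbar, min_le_right _ _⟩

theorem νmin_le (k : ℕ) : S.νmin ≤ S.ν k := by
  induction k with
  | zero => exact hS.νmin_le_ν_zero
  | succ k ih =>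
    by_cases hk : S.Unsuccessful P k
    · rw [((hS.update k).1 hk).2]
      exact ih.trans (le_mul_of_one_le_left (hS.νmin_pos.le.trans ih) hS.one_le_σ₂)
    · exact (hS.ν_succ_mem_Icc hk ih).1

theorem r_pos (k : ℕ) : 0 < S.r P k := norm_pos_iff.2 (hS.resid_ne_zero k)

theorem η_mul_rbar_lt_r (k : ℕ) : S.η * S.rbar k < S.r P k := by
  induction k with
  | zero =>
    rw [hS.rbar_zero]
    exact mul_lt_of_lt_one_left (hS.r_pos 0) hS.η_lt_one
  | succ k _ =>
    rcases le_or_gt (S.r P (k + 1)) (S.η * S.rbar k) with hle | hlt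
    · rw [(hS.rbar_update k).1 hle]
      exact mul_lt_of_lt_one_left (hS.r_pos (k + 1)) hS.η_lt_one
    · rwa [(hS.rbar_update k).2 hlt.not_ge]

theorem not_unsuccessful_of_r_succ_le {k : ℕ} (hk : S.r P (k + 1) ≤ S.η * S.rbar k) :
    ¬S.Unsuccessful P k := by
  intro hns
  rw [r, ((hS.update k).1 hns).1] at hk
  exact hk.not_gt (hS.η_mul_rbar_lt_r k)

theorem rbar_eq_r_of_mem_K {k : ℕ} (hk : k ∈ S.K P) : S.rbar k = S.r P k := by
  rcases hk with rfl | ⟨hk1, hk⟩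
  · exact hS.rbar_zero
  · obtain ⟨j, rfl⟩ := Nat.exists_eq_add_of_le' hk1
    exact (hS.rbar_update j).1 hk

theorem ν_le_νbar_of_mem_K {k : ℕ} (hk : k ∈ S.K P) : S.ν k ≤ S.νbar := by
  rcases hk with rfl | ⟨hk1, hk⟩
  · exact hS.ν_zero_le_νbar
  · obtain ⟨j, rfl⟩ := Nat.exists_eq_add_of_le' hk1
    exact (hS.ν_succ_mem_Icc (hS.not_unsuccessful_of_r_succ_le hk) (hS.νmin_le j)).2

theorem rbar_pos (k : ℕ) : 0 < S.rbar k := by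
  induction k with
  | zero => exact hS.rbar_zero ▸ hS.r_pos 0
  | succ k ih =>
    rcases le_or_gt (S.r P (k + 1)) (S.η * S.rbar k) with hle | hlt
    · exact (hS.rbar_update k).1 hle ▸ hS.r_pos (k + 1)
    · exact (hS.rbar_update k).2 hlt.not_ge ▸ ih

theorem μ_pos (k : ℕ) : 0 < S.μ k :=
  mul_pos (hS.νmin_pos.trans_le (hS.νmin_le k)) (Real.rpow_pos_of_pos (hS.rbar_pos k) _)

theorem half_μ_mul_sq_le_pred (k : ℕ) : S.μ k / 2 * ‖S.d k‖ ^ 2 ≤ S.pred P k := by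
  have hmodel := hS.le_sub_model k
  rw [G, P.model_regHess] at hmodel
  have hα : 0 ≤ S.α * S.μ k / 2 * ‖S.d k‖ ^ 2 := by
    have := hS.α_nonneg
    have := (hS.μ_pos k).le
    positivity
  have hshift := mul_nonneg (P.shift_nonneg (zero_le_one.trans hS.one_le_a) (S.x k))
    (sq_nonneg ‖P.A (S.xhat k - S.x k)‖)
  rw [pred]
  rw [d] at hα hmodel ⊢
  linarith

theorem isTheta_μ {z : EuclideanSpace ℝ (Fin n)} :
    S.μ =Θ[S.near P z] fun k => S.r P k ^ S.δ := by
  refine ⟨IsBigO.of_bound S.νbar (eventually_mem_K_near.mono fun k hk => ?_),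
    IsBigO.of_bound S.νmin⁻¹ (eventually_mem_K_near.mono fun k hk => ?_)⟩
  all_goals
    have hpow : 0 < S.r P k ^ S.δ := Real.rpow_pos_of_pos (hS.r_pos k) _
    rw [Real.norm_of_nonneg (hS.μ_pos k).le, Real.norm_of_nonneg hpow.le, μ,
      hS.rbar_eq_r_of_mem_K hk]
  · exact mul_le_mul_of_nonneg_right (hS.ν_le_νbar_of_mem_K hk) hpow.le
  · rw [← mul_assoc]
    exact le_mul_of_one_le_left hpow.le
      ((one_le_inv_mul₀ hS.νmin_pos).2 (hS.νmin_le k))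

theorem norm_subproblemResid_le_mul_r (k : ℕ) : ‖S.subproblemResid P k‖ ≤ S.θ * S.r P k :=
  (hS.norm_subproblemResid_le k).trans (by gcongr; exacts [hS.θ_nonneg, min_le_left _ _])

theorem mul_r_le_mul_norm_d (k : ℕ) :
    (1 - S.θ) * S.r P k ≤ (2 + ‖S.G P k‖) * ‖S.d k‖ := by
  have hlip := norm_proxGradResid_sub_le P.convexOn_φ (gradient P.f (S.x k) + S.G P k (S.d k))
    (gradient P.f (S.x k)) (S.xhat k) (S.x k)
  rw [add_sub_cancel_left, ← subproblemResid_eq_proxGradResid] at hlip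
  have htri := norm_le_norm_add_norm_sub (S.subproblemResid P k)
    (proxGradResid P.φ (gradient P.f (S.x k)) (S.x k))
  have hG := (S.G P k).le_opNorm (S.d k)
  calc (1 - S.θ) * S.r P k ≤ S.r P k - ‖S.subproblemResid P k‖ := by
        linarith [hS.norm_subproblemResid_le_mul_r k]
    _ ≤ 2 * ‖S.d k‖ + ‖S.G P k (S.d k)‖ := by linarith!
    _ ≤ (2 + ‖S.G P k‖) * ‖S.d k‖ := by linarith

theorem μ_mul_norm_xhat_sub_le {y : EuclideanSpace ℝ (Fin n)} (hy : y ∈ P.stronglyStationary)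
    (k : ℕ) :
    S.μ k * ‖S.xhat k - y‖ ≤ (‖S.G P k‖ + 1 + S.μ k) * ‖S.subproblemResid P k‖
      + 2 * ‖gradient P.f y - gradient P.f (S.x k) - S.G P k (y - S.x k)‖ := by
  refine mul_norm_le_of_inner_nonneg (hS.μ_pos k).le
    (P.mul_sq_norm_le_inner_regHess hS.one_le_a _ _ _) ?_
  convert inner_proxGradResid_nonneg P.convexOn_φ
    (v := gradient P.f (S.x k) + S.G P k (S.d k)) (y := S.xhat k) hy.1 using 2
  · rw [subproblemResid_eq_proxGradResid, G, d]
    simp only [map_sub]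
    abel
  · rw [subproblemResid_eq_proxGradResid]

theorem pred_pos (k : ℕ) : 0 < S.pred P k := by
  have hd : 0 < ‖S.d k‖ := by
    have hr := mul_pos (sub_pos.2 hS.θ_lt_one) (hS.r_pos k)
    exact pos_of_mul_pos_right (hr.trans_le (hS.mul_r_le_mul_norm_d k)) (by positivity)
  exact (mul_pos (half_pos (hS.μ_pos k)) (pow_pos hd 2)).trans_le (hS.half_μ_mul_sq_le_pred k)

theorem isBigO_μ_mul_sq_pred {l : Filter ℕ} :
    (fun k => S.μ k * ‖S.d k‖ ^ 2) =O[l] S.pred P := by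
  refine IsBigO.of_bound 2 (Eventually.of_forall fun k => ?_)
  have hpred := hS.half_μ_mul_sq_le_pred k
  rw [Real.norm_of_nonneg (mul_nonneg (hS.μ_pos k).le (sq_nonneg _))]
  linarith [Real.le_norm_self (S.pred P k)]

theorem one_lt_δ_add {q : ℝ} (hδq : S.δ < q) (hq : 1 < (1 + S.δ) * q) : 1 < S.δ + q := by
  rcases le_total q 1 with hq1 | hq1
  · nlinarith [hS.δ_pos]
  · linarith [hS.δ_pos]

section Near

variable {z : EuclideanSpace ℝ (Fin n)} {q : ℝ} (hz : P.LocalErrorBound z q)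

include hz

theorem isBigO_μ_D_rpow : S.μ =O[S.near P z] fun k => S.D P k ^ S.δ :=
  hS.isTheta_μ.1.trans ((isBigO_r_D hz).rpow hS.δ_pos.le (Eventually.of_forall D_nonneg))

theorem tendsto_μ_near : Tendsto S.μ (S.near P z) (𝓝 0) := by
  refine (hS.isBigO_μ_D_rpow hz).trans_tendsto ?_
  simpa only [Real.zero_rpow hS.δ_pos.ne'] using
    (tendsto_D_near hz).rpow_const (Or.inr hS.δ_pos.le)

theorem isLittleO_D_μ (hδq : S.δ < q) : S.D P =o[S.near P z] S.μ :=
  (isBigO_D_rpow_r hz).trans_isLittleO <|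
    (isLittleO_rpow_rpow_of_lt (tendsto_r_near hz) (fun k => (hS.r_pos k).le) hS.δ_pos.le
      hδq).trans_isBigO hS.isTheta_μ.2

theorem isBigO_G_one : S.G P =O[S.near P z] fun _ => (1 : ℝ) := by
  have hhess : Tendsto (fun k => P.hess (S.x k)) (S.near P z) (𝓝 (P.hess z)) :=
    (P.continuous_hess.tendsto z).comp tendsto_x_near
  have hshift := (isBigO_shift_D (S := S) hz).trans_tendsto (tendsto_D_near hz)
  exact ((hhess.add (hshift.smul_const (adjoint P.A ∘L P.A))).add
    ((hS.tendsto_μ_near hz).smul_const (ContinuousLinearMap.id ℝ _))).isBigO_one ℝ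

theorem isBigO_subproblemResid :
    S.subproblemResid P =O[S.near P z] fun k => S.D P k * S.μ k := by
  have hpow : (fun k => S.r P k ^ (1 + S.τ)) =O[S.near P z] fun k => S.r P k * S.r P k ^ S.δ := by
    refine (isBigO_rpow_rpow_of_le (tendsto_r_near hz) (fun k => (hS.r_pos k).le)
      (by linarith [hS.δ_pos]) (add_le_add_right hS.δ_le_τ 1)).congr_right fun k => ?_
    rw [Real.rpow_add (hS.r_pos k), Real.rpow_one]
  refine IsBigO.trans (IsBigO.of_bound S.θ (Eventually.of_forall fun k => ?_))
    (hpow.trans ((isBigO_r_D hz).mul hS.isTheta_μ.2))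
  rw [Real.norm_of_nonneg (Real.rpow_pos_of_pos (hS.r_pos k) _).le]
  exact (hS.norm_subproblemResid_le k).trans
    (mul_le_mul_of_nonneg_left (min_le_right _ _) hS.θ_nonneg)

theorem isBigO_gradient_sub_sub_G (hδq : S.δ < q) {y : ℕ → EuclideanSpace ℝ (Fin n)}
    (hy : (fun k => y k - S.x k) =O[S.near P z] S.D P) :
    (fun k => gradient P.f (y k) - gradient P.f (S.x k) - S.G P k (y k - S.x k))
      =O[S.near P z] fun k => S.D P k * S.μ k := by
  have hDμ := (hS.isLittleO_D_μ hz hδq).isBigO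
  have hrem := hz.isBigO_gradient_sub_sub_hess.comp_tendsto
    ((tendsto_near_of_isBigO_sub hz hy).prodMk_nhds tendsto_x_near)
  have hsq : (fun k => ‖y k - S.x k‖ ^ 2) =O[S.near P z] fun k => S.D P k * S.μ k := by
    simpa only [sq] using hy.norm_left.mul (hy.norm_left.trans hDμ)
  have hshift : (fun k => P.shift S.a (S.x k) • (adjoint P.A ∘L P.A) (y k - S.x k))
      =O[S.near P z] fun k => S.D P k * S.μ k := by
    refine ((isBigO_shift_D hz).smul ?_).congr_right fun k => smul_eq_mul _ _
    exact (((adjoint P.A ∘L P.A).isBigO_comp _ _).trans hy).trans hDμ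
  have hμ : (fun k => S.μ k • (y k - S.x k)) =O[S.near P z] fun k => S.D P k * S.μ k :=
    ((isBigO_refl S.μ _).smul hy).congr_right fun k => mul_comm _ _
  refine (((hrem.trans hsq).sub hshift).sub hμ).congr_left fun k => ?_
  simp only [G, CompositeProblem.regHess, add_apply, smul_apply, Function.comp_apply,
    ContinuousLinearMap.id_apply]
  abel

theorem isBigO_xhat_sub_nearest (hδq : S.δ < q) :
    (fun k => S.xhat k - P.nearest (S.x k)) =O[S.near P z] S.D P := by
  have hmodel := hS.isBigO_gradient_sub_sub_G hz hδq (isBigO_nearest_sub hz)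
  have hcoef : (fun k => ‖S.G P k‖ + 1 + S.μ k) =O[S.near P z] fun _ => (1 : ℝ) :=
    ((hS.isBigO_G_one hz).norm_left.add (isBigO_refl _ _)).add
      ((hS.tendsto_μ_near hz).isBigO_one ℝ)
  have hbound : (fun k => S.μ k * ‖S.xhat k - P.nearest (S.x k)‖)
      =O[S.near P z] fun k => S.D P k * S.μ k := by
    refine IsBigO.trans (isBigO_of_le _ fun k => ?_)
      (((hcoef.mul (hS.isBigO_subproblemResid hz).norm_left).congr_right
        fun k => one_mul _).add (hmodel.norm_left.const_mul_left 2))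
    rw [Real.norm_of_nonneg (mul_nonneg (hS.μ_pos k).le (norm_nonneg _))]
    exact (hS.μ_mul_norm_xhat_sub_le (nearest_mem hz k) k).trans (le_abs_self _)
  exact (((isBigO_refl (fun k => (S.μ k)⁻¹) _).mul hbound).congr
    (fun k => inv_mul_cancel_left₀ (hS.μ_pos k).ne' _)
    (fun k => by rw [mul_comm, mul_inv_cancel_right₀ (hS.μ_pos k).ne'])).of_norm_left

theorem isBigO_d_D (hδq : S.δ < q) : S.d =O[S.near P z] S.D P :=
  ((hS.isBigO_xhat_sub_nearest hz hδq).add (isBigO_nearest_sub hz)).congr_left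
    fun _ => sub_add_sub_cancel _ _ _

theorem tendsto_xhat_near (hδq : S.δ < q) : Tendsto S.xhat (S.near P z) (𝓝 z) :=
  tendsto_near_of_isBigO_sub hz (hS.isBigO_d_D hz hδq)

theorem isBigO_residNorm_xhat (hδq : S.δ < q) :
    (fun k => P.residNorm (S.xhat k)) =O[S.near P z] fun k => S.D P k * S.μ k := by
  have hsub := hS.isBigO_gradient_sub_sub_G hz hδq (hS.isBigO_d_D hz hδq)
  have hle (k : ℕ) : P.residNorm (S.xhat k) ≤ ‖S.subproblemResid P k‖
      + ‖gradient P.f (S.xhat k) - gradient P.f (S.x k) - S.G P k (S.d k)‖ := by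
    have hlip := norm_proxGradResid_sub_le P.convexOn_φ (gradient P.f (S.xhat k))
      (gradient P.f (S.x k) + S.G P k (S.d k)) (S.xhat k) (S.xhat k)
    rw [sub_self, norm_zero, mul_zero, zero_add, ← sub_sub,
      ← subproblemResid_eq_proxGradResid] at hlip
    exact (norm_le_norm_add_norm_sub' _ _).trans (add_le_add_right hlip _)
  refine IsBigO.trans (isBigO_of_le _ fun k => ?_)
    ((hS.isBigO_subproblemResid hz).norm_left.add hsub.norm_left)
  rw [CompositeProblem.residNorm, norm_norm]
  exact (hle k).trans (le_abs_self _)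

theorem isBigO_residNorm_xhat_rpow (hδq : S.δ < q) :
    (fun k => P.residNorm (S.xhat k)) =O[S.near P z] fun k => S.r P k ^ (S.δ + q) := by
  refine (hS.isBigO_residNorm_xhat hz hδq).trans
    (((isBigO_D_rpow_r hz).mul hS.isTheta_μ.1).congr_right fun k => ?_)
  rw [← Real.rpow_add (hS.r_pos k), add_comm]

theorem isBigO_infDist_xhat_rpow (hδq : S.δ < q) :
    (fun k => infDist (S.xhat k) P.stronglyStationary)
      =O[S.near P z] fun k => S.D P k ^ ((1 + S.δ) * q) := by
  have hres : (fun k => P.residNorm (S.xhat k)) =O[S.near P z] fun k => S.D P k ^ (1 + S.δ) := by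
    refine (hS.isBigO_residNorm_xhat hz hδq).trans
      (((isBigO_refl (S.D P) _).mul (hS.isBigO_μ_D_rpow hz)).congr_right fun k => ?_)
    rw [Real.rpow_one_add' (D_nonneg k) (by linarith [hS.δ_pos])]
  refine ((hz.isBigO_infDist.comp_tendsto (hS.tendsto_xhat_near hz hδq)).trans
    (hres.rpow (hS.δ_pos.trans hδq).le (Eventually.of_forall fun k =>
      Real.rpow_nonneg (D_nonneg k) _))).congr_right fun k => ?_
  rw [← Real.rpow_mul (D_nonneg k)]

theorem isLittleO_residNorm_xhat (hδq : S.δ < q) (hq : 1 < (1 + S.δ) * q) :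
    (fun k => P.residNorm (S.xhat k)) =o[S.near P z] S.r P :=
  ((hS.isBigO_residNorm_xhat_rpow hz hδq).trans_isLittleO
    (isLittleO_rpow_rpow_of_lt (tendsto_r_near hz) (fun k => (hS.r_pos k).le) zero_le_one
      (hS.one_lt_δ_add hδq hq))).congr_right fun _ => Real.rpow_one _

theorem isLittleO_infDist_xhat (hδq : S.δ < q) (hq : 1 < (1 + S.δ) * q) :
    (fun k => infDist (S.xhat k) P.stronglyStationary) =o[S.near P z] S.D P :=
  ((hS.isBigO_infDist_xhat_rpow hz hδq).trans_isLittleO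
    (isLittleO_rpow_rpow_of_lt (tendsto_D_near hz) D_nonneg zero_le_one
      hq)).congr_right fun _ => Real.rpow_one _

theorem isBigO_ared_sub_pred (hδq : S.δ < q) :
    (fun k => S.ared P k - S.pred P k) =O[S.near P z] fun k => ‖S.d k‖ ^ 3 := by
  have htaylor := isBigO_sub_sub_sub_inner (Eventually.of_forall P.hasGradientAt_f)
    hz.isBigO_gradient_sub_sub_hess
  refine (htaylor.comp_tendsto
    ((hS.tendsto_xhat_near hz hδq).prodMk_nhds tendsto_x_near)).neg_left.congr_left fun k => ?_
  simp only [Function.comp_apply, ared, pred, CompositeProblem.model, CompositeProblem.F]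
  ring

theorem isBigO_r_d : S.r P =O[S.near P z] S.d := by
  have hcoef : (fun k => 2 + ‖S.G P k‖) =O[S.near P z] fun _ => (1 : ℝ) :=
    (isBigO_const_const 2 one_ne_zero _).add (hS.isBigO_G_one hz).norm_left
  have hmul : (fun k => (1 - S.θ) * S.r P k) =O[S.near P z] S.d := by
    refine IsBigO.trans (isBigO_of_le _ fun k => ?_)
      ((hcoef.mul (isBigO_refl (fun k => ‖S.d k‖) _)).congr_right fun k => one_mul _).of_norm_right
    rw [Real.norm_of_nonneg (mul_nonneg (sub_pos.2 hS.θ_lt_one).le (hS.r_pos k).le)]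
    exact (hS.mul_r_le_mul_norm_d k).trans (le_abs_self _)
  exact (isBigO_const_mul_left_iff (sub_pos.2 hS.θ_lt_one).ne').1 hmul

theorem isLittleO_ared_sub_pred (hδq : S.δ < q) :
    (fun k => S.ared P k - S.pred P k) =o[S.near P z] S.pred P := by
  have hdμ : S.d =o[S.near P z] S.μ :=
    (hS.isBigO_d_D hz hδq).trans_isLittleO (hS.isLittleO_D_μ hz hδq)
  have hcube : (fun k => ‖S.d k‖ ^ 3) =o[S.near P z] fun k => S.μ k * ‖S.d k‖ ^ 2 :=
    (hdμ.norm_left.mul_isBigO (isBigO_refl (fun k => ‖S.d k‖ ^ 2) _)).congr_left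
      fun k => (pow_succ' _ _).symm
  exact ((hS.isBigO_ared_sub_pred hz hδq).trans_isLittleO hcube).trans_isBigO
    hS.isBigO_μ_mul_sq_pred

theorem isLittleO_threshold_pred :
    (fun k => S.pmin * (1 - S.θ) * ‖S.d k‖ * min (S.r P k) (S.r P k ^ S.κ))
      =o[S.near P z] S.pred P := by
  have hmin : (fun k => min (S.r P k) (S.r P k ^ S.κ)) =o[S.near P z]
      fun k => S.r P k * S.r P k ^ S.δ := by
    refine (IsBigO.of_bound' (Eventually.of_forall fun k => ?_)).trans_isLittleO
      ((isLittleO_rpow_rpow_of_lt (tendsto_r_near hz) (fun k => (hS.r_pos k).le)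
        (by linarith [hS.δ_pos]) hS.one_add_δ_lt_κ).congr_right fun k =>
          Real.rpow_one_add' (hS.r_pos k).le (by linarith [hS.δ_pos]))
    have hpow := Real.rpow_pos_of_pos (hS.r_pos k) S.κ
    rw [Real.norm_of_nonneg (le_min (hS.r_pos k).le hpow.le), Real.norm_of_nonneg hpow.le]
    exact min_le_right _ _
  have hdμ := hmin.trans_isBigO ((hS.isBigO_r_d hz).norm_right.mul hS.isTheta_μ.2)
  refine (((isBigO_refl (fun k => ‖S.d k‖) _).mul_isLittleO hdμ).const_mul_left
    (S.pmin * (1 - S.θ))).congr (fun k => ?_) (fun k => ?_) |>.trans_isBigO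
      hS.isBigO_μ_mul_sq_pred
  · ring
  · ring

theorem eventually_not_unsuccessful (hδq : S.δ < q) :
    ∀ᶠ k in S.near P z, ¬S.Unsuccessful P k := by
  filter_upwards [(hS.isLittleO_ared_sub_pred hz hδq).bound (half_pos (sub_pos.2 hS.c₁_lt_one)),
    (hS.isLittleO_threshold_pred hz).bound one_half_pos] with k hared hpred
  have hpos := hS.pred_pos k
  rw [Real.norm_of_nonneg hpos.le] at hared hpred
  rw [Unsuccessful, not_or, not_le, not_le]
  constructor
  · linarith [Real.le_norm_self
      (S.pmin * (1 - S.θ) * ‖S.d k‖ * min (S.r P k) (S.r P k ^ S.κ))]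
  · rw [lt_div_iff₀ hpos]
    nlinarith [neg_le_of_abs_le hared, mul_pos (sub_pos.2 hS.c₁_lt_one) hpos]

theorem eventually_x_succ_eq (hδq : S.δ < q) : ∀ᶠ k in S.near P z, S.x (k + 1) = S.xhat k :=
  (hS.eventually_not_unsuccessful hz hδq).mono fun k hk => ((hS.update k).2 hk).1

theorem eventually_succ_mem_K (hδq : S.δ < q) (hq : 1 < (1 + S.δ) * q) :
    ∀ᶠ k in S.near P z, k + 1 ∈ S.K P := by
  filter_upwards [(hS.isLittleO_residNorm_xhat hz hδq hq).bound hS.η_pos,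
    hS.eventually_x_succ_eq hz hδq, eventually_mem_K_near] with k hres hx hk
  refine Or.inr ⟨Nat.le_add_left 1 k, ?_⟩
  rw [Nat.add_sub_cancel, hS.rbar_eq_r_of_mem_K hk, r, hx]
  rwa [Real.norm_of_nonneg (P.residNorm_nonneg _), Real.norm_of_nonneg (hS.r_pos k).le] at hres

theorem eventually_dist_le (hδq : S.δ < q) (hq : 1 < (1 + S.δ) * q) :
    ∃ C ≥ 0, ∀ᶠ k in S.near P z,
      dist (S.x (k + 1)) (S.x k) ≤ C * S.D P k - C * S.D P (k + 1) := by
  obtain ⟨C, hC, hd⟩ := (hS.isBigO_d_D hz hδq).exists_nonneg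
  refine ⟨2 * C, by positivity, ?_⟩
  filter_upwards [hd.bound, (hS.isLittleO_infDist_xhat hz hδq hq).bound one_half_pos,
    hS.eventually_x_succ_eq hz hδq] with k hdk hDk hx
  rw [Real.norm_of_nonneg infDist_nonneg, Real.norm_of_nonneg (D_nonneg k), ← hx] at hDk
  rw [Real.norm_of_nonneg (D_nonneg k)] at hdk
  have hDC : C * S.D P (k + 1) ≤ C * (1 / 2 * S.D P k) := mul_le_mul_of_nonneg_left hDk hC
  rw [dist_eq_norm, hx]
  exact hdk.trans (by linarith)

theorem tendsto_and_eventually_mem_K (hδq : S.δ < q) (hq : 1 < (1 + S.δ) * q)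
    (hcluster : MapClusterPt z (atTop ⊓ 𝓟 (S.K P)) S.x) :
    Tendsto S.x atTop (𝓝 z) ∧ ∀ᶠ k in atTop, k ∈ S.K P := by
  obtain ⟨C, hC, hdist⟩ := hS.eventually_dist_le hz hδq hq
  exact tendsto_and_eventually_mem_of_dist_le_sub
    (V := fun y => C * infDist y P.stronglyStationary)
    ((continuous_infDist_pt _).const_mul C).continuousAt
    (by rw [infDist_zero_of_mem hz.mem_stronglyStationary, mul_zero])
    (fun y => mul_nonneg hC infDist_nonneg) hcluster
    ((hS.eventually_succ_mem_K hz hδq hq).and hdist)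

end Near

end IsRun

end RegProxNewton

theorem stmt_19_general {P : CompositeProblem n m} {S : RegProxNewton n} (hS : S.IsRun P)
    {z : EuclideanSpace ℝ (Fin n)} {q : ℝ} (hz : P.LocalErrorBound z q) (hδq : S.δ < q)
    (hq : 1 < (1 + S.δ) * q) (hcluster : MapClusterPt z (atTop ⊓ 𝓟 (S.K P)) S.x) :
    Tendsto S.x atTop (𝓝 z) ∧
    Tendsto (S.r P) atTop (𝓝 0) ∧
    ((fun k => S.r P (k + 1)) =O[atTop] fun k => S.r P k ^ (S.δ + q)) ∧
    Tendsto (S.D P) atTop (𝓝 0) ∧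
    (fun k => S.D P (k + 1)) =O[atTop] fun k => S.D P k ^ ((1 + S.δ) * q) := by
  obtain ⟨hx, hK⟩ := hS.tendsto_and_eventually_mem_K hz hδq hq hcluster
  have hnear : atTop ≤ S.near P z := le_inf (tendsto_iff_comap.1 hx) (le_principal_iff.2 hK)
  have hsucc := hS.eventually_x_succ_eq hz hδq
  have hr := (hS.isBigO_residNorm_xhat_rpow hz hδq).congr'
    (hsucc.mono fun k hk => congrArg P.residNorm hk.symm) EventuallyEq.rfl
  have hD := (hS.isBigO_infDist_xhat_rpow hz hδq).congr'
    (hsucc.mono fun k hk => congrArg (infDist · P.stronglyStationary) hk.symm) EventuallyEq.rfl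
  exact ⟨hx, (RegProxNewton.tendsto_r_near hz).mono_left hnear, hr.mono hnear,
    (RegProxNewton.tendsto_D_near hz).mono_left hnear, hD.mono hnear⟩

end Development

/-- Corollary 5.8: if additionally `q > 1/(1+δ)`, then `{xᵏ}` converges to `x*`, `{‖r(xᵏ)‖}`
converges to `0` with order `ρ = min{1+τ, δ+q} > 1`, and `{dist(xᵏ, X*)}` converges to `0`
with order `(1+δ)q > 1`. -/
theorem stmt_19 {n m : ℕ}
    -- problem data: f(x) = ψ(Ax − b), F = f + φ bounded below, φ convex, ψ C²
    (ψ : EuclideanSpace ℝ (Fin m) → ℝ)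
    (A : EuclideanSpace ℝ (Fin n) →L[ℝ] EuclideanSpace ℝ (Fin m))
    (b : EuclideanSpace ℝ (Fin m))
    (φ : EuclideanSpace ℝ (Fin n) → ℝ)
    (hψ : ContDiff ℝ 2 ψ) (hφ : ConvexOn ℝ Set.univ φ)
    (f F : EuclideanSpace ℝ (Fin n) → ℝ)
    (hf : ∀ y, f y = ψ (A y - b)) (hF : ∀ y, F y = f y + φ y)
    (hFbdd : BddBelow (Set.range F))
    -- algorithm parameters
    (c₁ c₂ σ₁ σ₂ η θ α a νmin ν₀ νbar δ τ pmin κ : ℝ)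
    (hc₁ : 0 < c₁) (hc₁' : c₁ < 1) (hc₂ : c₁ < c₂) (hc₂' : c₂ < 1)
    (hσ₁ : 0 < σ₁) (hσ₁' : σ₁ < 1) (hσ₂ : 1 < σ₂)
    (hη : 0 < η) (hη' : η < 1) (hθ : 0 < θ) (hθ' : θ < 1)
    (hα : 0 < α) (hα' : α < 1) (ha : 1 ≤ a)
    (hνmin : 0 < νmin) (hν₀a : νmin ≤ ν₀) (hν₀b : ν₀ ≤ νbar)
    (hδ0 : 0 < δ) (hδ1 : δ ≤ 1) (hτ : δ ≤ τ)
    (hpmin : 0 < pmin) (hpmin' : pmin < 1 / 2) (hκ : 1 + δ < κ)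
    -- iterates and regularization sequences
    (x xhat : ℕ → EuclideanSpace ℝ (Fin n)) (ν rbar μ : ℕ → ℝ)
    (hν0 : ν 0 = ν₀) (hrbar0 : rbar 0 = ‖resid f φ (x 0)‖)
    (hμ : ∀ k, μ k = ν k * rbar k ^ δ)
    -- Λ_k, H_k + μ_k I =: G_k, the models q_k, q̂_k, and the subproblem residual R_k
    (Λ : ℕ → ℝ)
    (hΛ : ∀ k, Λ k = a * max (-(lambdaMin (fderiv ℝ (gradient ψ) (A (x k) - b)))) 0)
    (G : ℕ → EuclideanSpace ℝ (Fin n) →L[ℝ] EuclideanSpace ℝ (Fin n))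
    (hG : ∀ k, G k = fderiv ℝ (gradient f) (x k)
        + Λ k • ((ContinuousLinearMap.adjoint A).comp A)
        + μ k • ContinuousLinearMap.id ℝ (EuclideanSpace ℝ (Fin n)))
    (q qhat : ℕ → EuclideanSpace ℝ (Fin n) → ℝ)
    (hq : ∀ k y, q k y = f (x k) + ⟪gradient f (x k), y - x k⟫
        + (1 / 2) * ⟪y - x k, (fderiv ℝ (gradient f) (x k)) (y - x k)⟫ + φ y)
    (hqhat : ∀ k y, qhat k y = f (x k) + ⟪gradient f (x k), y - x k⟫
        + (1 / 2) * ⟪y - x k, (G k) (y - x k)⟫ + φ y)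
    (R : ℕ → EuclideanSpace ℝ (Fin n) → EuclideanSpace ℝ (Fin n))
    (hR : ∀ k y, R k y = y - proxPt φ (y - gradient f (x k) - (G k) (y - x k)))
    -- the inexactness criteria satisfied by x̂ᵏ
    (hinex1 : ∀ k, ‖R k (xhat k)‖ ≤
        θ * min ‖resid f φ (x k)‖ (‖resid f φ (x k)‖ ^ (1 + τ)))
    (hinex2 : ∀ k, α * μ k / 2 * ‖xhat k - x k‖ ^ 2 ≤ F (x k) - qhat k (xhat k))
    -- dᵏ, pred_k, ared_k, ρ_k
    (d : ℕ → EuclideanSpace ℝ (Fin n)) (hd : ∀ k, d k = xhat k - x k)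
    (pred ared ρ : ℕ → ℝ)
    (hpred : ∀ k, pred k = F (x k) - q k (xhat k))
    (hared : ∀ k, ared k = F (x k) - F (xhat k))
    (hρ : ∀ k, ρ k = ared k / pred k)
    -- update rules (unsuccessful / successful / highly successful iterations)
    (unsucc : ℕ → Prop)
    (hunsucc : ∀ k, unsucc k ↔
        pred k ≤ pmin * (1 - θ) * ‖d k‖ *
          min ‖resid f φ (x k)‖ (‖resid f φ (x k)‖ ^ κ) ∨ ρ k ≤ c₁)
    (hupd : ∀ k,
        (unsucc k → x (k + 1) = x k ∧ ν (k + 1) = σ₂ * ν k) ∧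
        (¬unsucc k → x (k + 1) = xhat k ∧
          (ρ k ≤ c₂ → ν (k + 1) = min (ν k) νbar) ∧
          (c₂ < ρ k → ν (k + 1) = min (max (σ₁ * ν k) νmin) νbar)))
    (hrbarupd : ∀ k,
        (‖resid f φ (x (k + 1))‖ ≤ η * rbar k → rbar (k + 1) = ‖resid f φ (x (k + 1))‖) ∧
        (¬‖resid f φ (x (k + 1))‖ ≤ η * rbar k → rbar (k + 1) = rbar k))
    -- no iterate is stationary (otherwise the algorithm terminates)
    (hrne : ∀ k, resid f φ (x k) ≠ 0)
    -- the index set K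
    (K : Set ℕ)
    (hK : K = {0} ∪ {k | 1 ≤ k ∧ ‖resid f φ (x k)‖ ≤ η * rbar (k - 1)})
    -- local assumptions: X* = set of strongly stationary points, x* an accumulation
    -- point of {xᵏ}_{k∈K} lying in X*
    (Xstar : Set (EuclideanSpace ℝ (Fin n)))
    (hXstar : Xstar = {y | -gradient f y ∈ subdiff φ y ∧
        ∀ u, 0 ≤ ⟪(fderiv ℝ (gradient ψ) (A y - b)) u, u⟫})
    (hXne : Xstar.Nonempty)
    (xstar : EuclideanSpace ℝ (Fin n)) (hxstar : xstar ∈ Xstar)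
    (hacc : MapClusterPt xstar (atTop ⊓ 𝓟 K) x)
    -- local Lipschitz continuity of ∇²ψ near x*
    (ε Lψ : ℝ) (hε : 0 < ε) (hLψ : 0 < Lψ)
    (hlipψ : ∀ u ∈ closedBall xstar ε, ∀ v ∈ closedBall xstar ε,
      ‖fderiv ℝ (gradient ψ) (A u - b) - fderiv ℝ (gradient ψ) (A v - b)‖ ≤ Lψ * ‖A u - A v‖)
    -- Hölderian local error bound of order qq on X*
    (β qq : ℝ) (hβ : 0 < β) (hqq : max δ (1 - δ) < qq)
    (herrbd : ∀ y ∈ closedBall xstar ε, β * infDist y Xstar ≤ ‖resid f φ y‖ ^ qq)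
    -- derived constants: ε₀, L = ‖A‖³Lψ, and a Lipschitz constant L_g of ∇f on B_{ε₀}(x*)
    (ε₀ L Lg : ℝ) (hε₀ : ε₀ = min ε (ε / ‖A‖)) (hL : L = ‖A‖ ^ 3 * Lψ) (hLg : 0 < Lg)
    (hlipg : ∀ u ∈ closedBall xstar ε₀, ∀ v ∈ closedBall xstar ε₀,
      ‖gradient f u - gradient f v‖ ≤ Lg * ‖u - v‖)
    (hqq' : 1 / (1 + δ) < qq) :
    Tendsto x atTop (nhds xstar) ∧
    1 < min (1 + τ) (δ + qq) ∧
    Tendsto (fun k => ‖resid f φ (x k)‖) atTop (nhds 0) ∧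
    (∃ C > (0 : ℝ), ∃ k₀ : ℕ, ∀ k ≥ k₀,
      ‖resid f φ (x (k + 1))‖ ≤ C * ‖resid f φ (x k)‖ ^ min (1 + τ) (δ + qq)) ∧
    1 < (1 + δ) * qq ∧
    Tendsto (fun k => infDist (x k) Xstar) atTop (nhds 0) ∧
    ∃ C > (0 : ℝ), ∃ k₀ : ℕ, ∀ k ≥ k₀,
      infDist (x (k + 1)) Xstar ≤ C * infDist (x k) Xstar ^ ((1 + δ) * qq) := by
  obtain ⟨rfl, rfl, rfl, rfl, rfl, rfl⟩ : f = _ ∧ F = _ ∧ μ = _ ∧ Λ = _ ∧ G = _ ∧ d = _ :=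
    ⟨funext hf, funext hF, funext hμ, funext hΛ, funext hG, funext hd⟩
  obtain ⟨rfl, rfl, rfl⟩ : q = _ ∧ qhat = _ ∧ R = _ := ⟨funext₂ hq, funext₂ hqhat, funext₂ hR⟩
  obtain ⟨rfl, rfl, rfl, rfl⟩ : pred = _ ∧ ared = _ ∧ ρ = _ ∧ unsucc = _ :=
    ⟨funext hpred, funext hared, funext hρ, funext fun k => propext (hunsucc k)⟩
  subst hK hXstar hν0
  let P : CompositeProblem n m := ⟨ψ, A, b, φ, hψ, hφ⟩
  let S : RegProxNewton n :=
    ⟨c₁, c₂, σ₁, σ₂, η, θ, α, a, νmin, νbar, δ, τ, pmin, κ, x, xhat, ν, rbar⟩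
  have hS : S.IsRun P := ⟨hc₁', hσ₂.le, hη, hη', hθ.le, hθ', hα.le, ha, hνmin, hν₀a, hν₀b, hδ0, hτ,
    hκ, hrne, hinex1, hinex2, hupd, hrbar0, hrbarupd⟩
  have hδq : δ < qq := (le_max_left _ _).trans_lt hqq
  have hq1 : 1 < (1 + δ) * qq := (div_lt_iff₀' (by linarith)).1 hqq'
  have hρ1 : 1 < min (1 + τ) (δ + qq) := lt_min (by linarith) (hS.one_lt_δ_add hδq hq1)
  obtain ⟨hx, hr, hr', hD, hD'⟩ := stmt_19_general hS
    (.of_closedBall hε hβ hxstar hlipψ herrbd) hδq hq1 hacc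
  have hrmin := hr'.trans (isBigO_rpow_rpow_of_le hr (fun k => (hS.r_pos k).le)
    (zero_le_one.trans hρ1.le) (min_le_right _ _))
  exact ⟨hx, hρ1, hr,
    exists_forall_ge_le_mul_of_isBigO hrmin fun k => Real.rpow_nonneg (norm_nonneg _) _, hq1, hD,
    exists_forall_ge_le_mul_of_isBigO hD' fun k => Real.rpow_nonneg infDist_nonneg _⟩
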